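/- For every integer k ≥ 0 and every p ∈ (1, ∞) there exists a constant C = C(k, p) > 0 such that the following holds: for every g : (0, ∞) → ℝ of class C^k and every locally integrable f : (0, ∞) → ℝ of class C^(max(k−1,0)), writing F(x) = ∫₀^x f(y) dy, one has Σ_{j=0}^{k} ‖(g·F)^(j)‖_{L^p(0,∞)} ≤ C · ( Σ_{l=0}^{k} sup_{x>0} |x g^(l)(x)| · ‖f‖_{L^p(0,∞)} + [k ≥ 1] · (max_{0 ≤ l ≤ k−1} sup_{x>0} |g^(l)(x)|) · Σ_{i=0}^{k−1} ‖f^(i)‖_{L^p(0,∞)} ), where [k ≥ 1] is 1 if k ≥ 1 and 0 if k = 0, and the inequality is interpreted in [0, ∞]. -/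

import Mathlib

open MeasureTheory ENNReal

/-!
By Leibniz, `(g F)^(j)` is a combination of the products `g^(i) F^(j-i)`, with `F^(m+1) = f^(m)`.
The products with a derivative of `F` are bounded by `sup |g^(i)|` times a norm of a derivative
of `f`. The product `g^(j) F` is written as `(x g^(j)) (F / x)`, and Hardy's inequality bounds
`‖F / x‖_p` by `p / (p - 1)` times `‖f‖_p`. Hardy's inequality is the Schur test for the kernel
`1_{y < x} / x` with the weight `t ^ (-1/(pq))`, where `q = p / (p - 1)`, on both sides.
-/

section SchurTest

variable {α β : Type*} [MeasurableSpace α] [MeasurableSpace β] {p q : ℝ}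

lemma rpow_lintegral_le_of_weight {κ : Measure β} (hpq : p.HolderConjugate q) {h v : β → ℝ≥0∞}
    (hh : AEMeasurable h κ) (hv : AEMeasurable v κ) (hv_pos : ∀ᵐ y ∂κ, v y ≠ 0 ∧ v y ≠ ∞) :
    (∫⁻ y, h y ∂κ) ^ p ≤ (∫⁻ y, v y ^ q ∂κ) ^ (p / q) * ∫⁻ y, (h y / v y) ^ p ∂κ := by
  have factor : ∫⁻ y, h y ∂κ = ∫⁻ y, ((fun y => h y / v y) * v) y ∂κ :=
    lintegral_congr_ae <| hv_pos.mono fun y hy => (ENNReal.div_mul_cancel hy.1 hy.2).symm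
  calc (∫⁻ y, h y ∂κ) ^ p
      ≤ ((∫⁻ y, (h y / v y) ^ p ∂κ) ^ (1 / p) * (∫⁻ y, v y ^ q ∂κ) ^ (1 / q)) ^ p := by
        rw [factor]
        exact ENNReal.rpow_le_rpow
          (ENNReal.lintegral_mul_le_Lp_mul_Lq κ hpq (hh.div hv) hv) hpq.nonneg
    _ = (∫⁻ y, v y ^ q ∂κ) ^ (p / q) * ∫⁻ y, (h y / v y) ^ p ∂κ := by
        rw [ENNReal.mul_rpow_of_nonneg _ _ hpq.nonneg, ← ENNReal.rpow_mul, ← ENNReal.rpow_mul,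
          one_div_mul_cancel hpq.ne_zero, ENNReal.rpow_one, one_div_mul_eq_div, mul_comm]

variable {μ : Measure α} {ν : Measure β}

lemma rpow_lintegral_mul_le_of_schur (hpq : p.HolderConjugate q) {k h v : β → ℝ≥0∞} {a u : ℝ≥0∞}
    (hk : Measurable k) (hh : AEMeasurable h ν) (hv : AEMeasurable v ν)
    (hv_pos : ∀ᵐ y ∂ν, v y ≠ 0 ∧ v y ≠ ∞) (ha : ∫⁻ y, k y * v y ^ q ∂ν ≤ a * u ^ q) :
    (∫⁻ y, k y * h y ∂ν) ^ p ≤ a ^ (p / q) * ∫⁻ y, k y * u ^ p * (h y / v y) ^ p ∂ν := by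
  -- Hölder's inequality is applied with respect to the measure `k ν`.
  have hac := withDensity_absolutelyContinuous ν k
  have hhv : AEMeasurable (fun y => (h y / v y) ^ p) ν := (hh.div hv).pow_const p
  have holder := rpow_lintegral_le_of_weight hpq (hh.mono_ac hac) (hv.mono_ac hac)
    (hac.ae_le hv_pos)
  simp only [lintegral_withDensity_eq_lintegral_mul₀ hk.aemeasurable hh,
    lintegral_withDensity_eq_lintegral_mul₀ hk.aemeasurable (hv.pow_const q),
    lintegral_withDensity_eq_lintegral_mul₀ hk.aemeasurable hhv,
    Pi.mul_apply] at holder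
  calc (∫⁻ y, k y * h y ∂ν) ^ p
      ≤ (∫⁻ y, k y * v y ^ q ∂ν) ^ (p / q) * ∫⁻ y, k y * (h y / v y) ^ p ∂ν := holder
    _ ≤ (a * u ^ q) ^ (p / q) * ∫⁻ y, k y * (h y / v y) ^ p ∂ν := by
        gcongr
        exact div_nonneg hpq.nonneg hpq.symm.nonneg
    _ = a ^ (p / q) * (u ^ p * ∫⁻ y, k y * (h y / v y) ^ p ∂ν) := by
        rw [ENNReal.mul_rpow_of_nonneg _ _ (div_nonneg hpq.nonneg hpq.symm.nonneg),
          ← ENNReal.rpow_mul, mul_div_cancel₀ _ hpq.symm.ne_zero, mul_assoc]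
    _ = a ^ (p / q) * ∫⁻ y, k y * u ^ p * (h y / v y) ^ p ∂ν := by
        rw [← lintegral_const_mul'' (f := fun y => k y * (h y / v y) ^ p) _
          (hk.aemeasurable.mul hhv)]
        simp only [mul_left_comm, mul_assoc]

theorem schur_test [SFinite μ] [SFinite ν] (hpq : p.HolderConjugate q) {K : α → β → ℝ≥0∞}
    (hK : Measurable (Function.uncurry K)) {u : α → ℝ≥0∞} (hu : AEMeasurable u μ)
    {v : β → ℝ≥0∞} (hv : AEMeasurable v ν) (hv_pos : ∀ᵐ y ∂ν, v y ≠ 0 ∧ v y ≠ ∞) {a b : ℝ≥0∞}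
    (ha : ∀ᵐ x ∂μ, ∫⁻ y, K x y * v y ^ q ∂ν ≤ a * u x ^ q)
    (hb : ∀ᵐ y ∂ν, ∫⁻ x, K x y * u x ^ p ∂μ ≤ b * v y ^ p)
    {h : β → ℝ≥0∞} (hh : AEMeasurable h ν) :
    ∫⁻ x, (∫⁻ y, K x y * h y ∂ν) ^ p ∂μ ≤ a ^ (p / q) * b * ∫⁻ y, h y ^ p ∂ν := by
  have hKx (x : α) : Measurable (K x) := hK.of_uncurry_left
  have hKy (y : β) : Measurable fun x => K x y := hK.of_uncurry_right
  have hKuh : AEMeasurable (Function.uncurry fun x y => K x y * u x ^ p * (h y / v y) ^ p)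
      (μ.prod ν) :=
    (hK.aemeasurable.mul (hu.pow_const p).comp_fst).mul ((hh.div hv).pow_const p).comp_snd
  have hKuh_int : AEMeasurable (fun x => ∫⁻ y, K x y * u x ^ p * (h y / v y) ^ p ∂ν) μ :=
    hKuh.lintegral_prod_right'
  calc ∫⁻ x, (∫⁻ y, K x y * h y ∂ν) ^ p ∂μ
      ≤ ∫⁻ x, a ^ (p / q) * ∫⁻ y, K x y * u x ^ p * (h y / v y) ^ p ∂ν ∂μ :=
        lintegral_mono_ae <| ha.mono fun x hx =>
          rpow_lintegral_mul_le_of_schur hpq (hKx x) hh hv hv_pos hx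
    _ = a ^ (p / q) * ∫⁻ y, ∫⁻ x, K x y * u x ^ p * (h y / v y) ^ p ∂μ ∂ν := by
        rw [lintegral_const_mul'' _ hKuh_int, lintegral_lintegral_swap hKuh]
    _ = a ^ (p / q) * ∫⁻ y, (∫⁻ x, K x y * u x ^ p ∂μ) * (h y / v y) ^ p ∂ν := by
        congr! 3 with y
        exact lintegral_mul_const'' _ ((hKy y).aemeasurable.mul (hu.pow_const p))
    _ ≤ a ^ (p / q) * ∫⁻ y, b * h y ^ p ∂ν := by
        gcongr 1
        refine lintegral_mono_ae ?_
        filter_upwards [hb, hv_pos] with y hby hvy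
        calc (∫⁻ x, K x y * u x ^ p ∂μ) * (h y / v y) ^ p
            ≤ b * v y ^ p * (h y / v y) ^ p := by gcongr
          _ = b * h y ^ p := by
              rw [mul_assoc, ← ENNReal.mul_rpow_of_nonneg _ _ hpq.nonneg,
                ENNReal.mul_div_cancel hvy.1 hvy.2]
    _ = a ^ (p / q) * b * ∫⁻ y, h y ^ p ∂ν := by
        rw [lintegral_const_mul'' _ (hh.pow_const p), mul_assoc]

end SchurTest

section PowerIntegrals

open Set

variable {a x : ℝ}

lemma lintegral_Ioo_zero_rpow (ha : -1 < a) (hx : 0 < x) :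
    ∫⁻ y in Ioo 0 x, ENNReal.ofReal (y ^ a) = ENNReal.ofReal (x ^ (a + 1) / (a + 1)) := by
  have hint : IntegrableOn (fun y : ℝ => y ^ a) (Ioo 0 x) :=
    (intervalIntegrable_iff_integrableOn_Ioo_of_le hx.le).1
      (intervalIntegral.intervalIntegrable_rpow' ha)
  have hnonneg : 0 ≤ᵐ[volume.restrict (Ioo 0 x)] fun y : ℝ => y ^ a :=
    ae_restrict_of_forall_mem measurableSet_Ioo fun y hy => Real.rpow_nonneg hy.1.le a
  rw [← ofReal_integral_eq_lintegral_ofReal hint hnonneg, ← integral_Ioc_eq_integral_Ioo,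
    ← intervalIntegral.integral_of_le hx.le, integral_rpow (Or.inl ha),
    Real.zero_rpow (by linarith), sub_zero]

lemma lintegral_Ioi_rpow_of_lt (ha : a < -1) (hx : 0 < x) :
    ∫⁻ y in Ioi x, ENNReal.ofReal (y ^ a) = ENNReal.ofReal (-x ^ (a + 1) / (a + 1)) := by
  have hnonneg : 0 ≤ᵐ[volume.restrict (Ioi x)] fun y : ℝ => y ^ a :=
    ae_restrict_of_forall_mem measurableSet_Ioi fun y hy => Real.rpow_nonneg (hx.trans hy).le a
  rw [← ofReal_integral_eq_lintegral_ofReal (integrableOn_Ioi_rpow_of_lt ha hx) hnonneg,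
    integral_Ioi_rpow_of_lt ha hx]

end PowerIntegrals

section HardyInequality

open Set

/-- The kernel `1_{y < x} / x` on `(0, ∞)²` of the Hardy averaging operator
`h ↦ (x ↦ x⁻¹ ∫₀ˣ h)`. -/
noncomputable def hardyKernel (x y : ℝ) : ℝ≥0∞ :=
  (Iio x).indicator (fun _ => ENNReal.ofReal x⁻¹) y

lemma measurable_uncurry_hardyKernel : Measurable (Function.uncurry hardyKernel) :=
  Measurable.indicator (s := {z : ℝ × ℝ | z.2 < z.1}) (f := fun z => ENNReal.ofReal z.1⁻¹)
    (by fun_prop) (measurableSet_lt measurable_snd measurable_fst)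

lemma lintegral_hardyKernel_mul_right (x : ℝ) (h : ℝ → ℝ≥0∞) :
    ∫⁻ y in Ioi 0, hardyKernel x y * h y = ENNReal.ofReal x⁻¹ * ∫⁻ y in Ioo 0 x, h y := by
  have kernel_mul (y : ℝ) :
      hardyKernel x y * h y = (Iio x).indicator (fun y => ENNReal.ofReal x⁻¹ * h y) y := by
    simp only [hardyKernel, indicator_mul_left]
  simp only [kernel_mul]
  rw [lintegral_indicator measurableSet_Iio, Measure.restrict_restrict measurableSet_Iio,
    Iio_inter_Ioi, lintegral_const_mul' _ _ ENNReal.ofReal_ne_top]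

lemma lintegral_hardyKernel_mul_left {y : ℝ} (hy : 0 ≤ y) (h : ℝ → ℝ≥0∞) :
    ∫⁻ x in Ioi 0, hardyKernel x y * h x = ∫⁻ x in Ioi y, ENNReal.ofReal x⁻¹ * h x := by
  have kernel_mul (x : ℝ) :
      hardyKernel x y * h x = (Ioi y).indicator (fun x => ENNReal.ofReal x⁻¹ * h x) x := by
    by_cases hyx : y < x <;> simp [hardyKernel, hyx]
  simp only [kernel_mul]
  rw [lintegral_indicator measurableSet_Ioi, Measure.restrict_restrict measurableSet_Ioi,
    Ioi_inter_Ioi, max_eq_left hy]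

variable {p q : ℝ}

/-- The power weight `t ^ (-1/(pq))` for which the Schur test is sharp on `hardyKernel`. -/
noncomputable def hardyWeight (p q t : ℝ) : ℝ≥0∞ :=
  ENNReal.ofReal (t ^ (-(p * q)⁻¹))

lemma measurable_hardyWeight : Measurable (hardyWeight p q) := by
  unfold hardyWeight
  fun_prop

lemma hardyWeight_comm (t : ℝ) : hardyWeight p q t = hardyWeight q p t := by
  rw [hardyWeight, hardyWeight, mul_comm]

lemma hardyWeight_rpow (hp : p ≠ 0) (hq : 0 < q) {t : ℝ} (ht : 0 < t) :
    hardyWeight p q t ^ q = ENNReal.ofReal (t ^ (-p⁻¹)) := by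
  rw [hardyWeight, ENNReal.ofReal_rpow_of_nonneg (by positivity) hq.le, ← Real.rpow_mul ht.le]
  congr 2
  field_simp

lemma lintegral_hardyKernel_mul_hardyWeight_right (hpq : p.HolderConjugate q) {x : ℝ}
    (hx : 0 < x) :
    ∫⁻ y in Ioi 0, hardyKernel x y * hardyWeight p q y ^ q =
      ENNReal.ofReal q * hardyWeight p q x ^ q := by
  have hq := hpq.symm.pos
  have exponent : -p⁻¹ + 1 = q⁻¹ := by linarith [hpq.one_sub_inv]
  rw [lintegral_hardyKernel_mul_right, setLIntegral_congr_fun measurableSet_Ioo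
      fun y hy => hardyWeight_rpow hpq.ne_zero hq hy.1,
    lintegral_Ioo_zero_rpow (by linarith [hpq.symm.inv_pos]) hx, exponent,
    hardyWeight_rpow hpq.ne_zero hq hx, ← ENNReal.ofReal_mul (by positivity),
    ← ENNReal.ofReal_mul hq.le, ← exponent, Real.rpow_add_one hx.ne', exponent]
  congr 1
  field_simp

lemma lintegral_hardyKernel_mul_hardyWeight_left (hpq : p.HolderConjugate q) {y : ℝ}
    (hy : 0 < y) :
    ∫⁻ x in Ioi 0, hardyKernel x y * hardyWeight p q x ^ p =
      ENNReal.ofReal q * hardyWeight p q y ^ p := by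
  have hq := hpq.symm.pos
  have weight_rpow {t : ℝ} (ht : 0 < t) :
      hardyWeight p q t ^ p = ENNReal.ofReal (t ^ (-q⁻¹)) := by
    rw [hardyWeight_comm, hardyWeight_rpow hq.ne' hpq.pos ht]
  have integrand {x : ℝ} (hx : x ∈ Ioi y) : ENNReal.ofReal x⁻¹ * hardyWeight p q x ^ p =
      ENNReal.ofReal (x ^ (-q⁻¹ - 1)) := by
    have hx0 : 0 < x := hy.trans hx
    rw [weight_rpow hx0, ← ENNReal.ofReal_mul (by positivity), Real.rpow_sub_one hx0.ne',
      inv_mul_eq_div]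
  rw [lintegral_hardyKernel_mul_left hy.le, setLIntegral_congr_fun measurableSet_Ioi
      fun x hx => integrand hx,
    lintegral_Ioi_rpow_of_lt (by linarith [hpq.symm.inv_pos]) hy, weight_rpow hy,
    ← ENNReal.ofReal_mul hq.le, sub_add_cancel]
  congr 1
  field_simp

theorem hardy_inequality_lintegral (hpq : p.HolderConjugate q) {h : ℝ → ℝ≥0∞}
    (hh : AEMeasurable h (volume.restrict (Ioi 0))) :
    ∫⁻ x in Ioi 0, (ENNReal.ofReal x⁻¹ * ∫⁻ y in Ioo 0 x, h y) ^ p ≤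
      ENNReal.ofReal q ^ p * ∫⁻ y in Ioi 0, h y ^ p := by
  have weight_pos : ∀ᵐ t ∂volume.restrict (Ioi 0), hardyWeight p q t ≠ 0 ∧ hardyWeight p q t ≠ ∞ :=
    ae_restrict_of_forall_mem measurableSet_Ioi fun t ht =>
      ⟨(ENNReal.ofReal_pos.2 (Real.rpow_pos_of_pos ht _)).ne', ENNReal.ofReal_ne_top⟩
  have schur := schur_test hpq measurable_uncurry_hardyKernel
    measurable_hardyWeight.aemeasurable measurable_hardyWeight.aemeasurable weight_pos
    (ae_restrict_of_forall_mem measurableSet_Ioi fun x hx =>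
      (lintegral_hardyKernel_mul_hardyWeight_right hpq hx).le)
    (ae_restrict_of_forall_mem measurableSet_Ioi fun y hy =>
      (lintegral_hardyKernel_mul_hardyWeight_left hpq hy).le) hh
  have constant : ENNReal.ofReal q ^ (p / q) * ENNReal.ofReal q = ENNReal.ofReal q ^ p := by
    have hq : ENNReal.ofReal q ≠ 0 := (ENNReal.ofReal_pos.2 hpq.symm.pos).ne'
    rw [hpq.div_conj_eq_sub_one, ENNReal.rpow_sub _ _ hq ENNReal.ofReal_ne_top, ENNReal.rpow_one,
      ENNReal.div_mul_cancel hq ENNReal.ofReal_ne_top]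
  simpa only [lintegral_hardyKernel_mul_right, constant] using schur

end HardyInequality

section CumulativeIntegral

open Set

variable {E : Type*} [NormedAddCommGroup E] {f : ℝ → E}

lemma integrableOn_Ioo_zero_of_continuousOn (hf : ContinuousOn f (Ioi 0)) {a : ℝ} (ha : 0 < a)
    (hfa : IntegrableOn f (Ioo 0 a)) (x : ℝ) : IntegrableOn f (Ioo 0 x) := by
  have hfx : IntegrableOn f (Icc a x) :=
    (hf.mono fun y hy => ha.trans_le hy.1).integrableOn_compact isCompact_Icc
  refine (hfa.union hfx).mono_set fun y hy => ?_
  exact (lt_or_ge y a).imp (fun hya => ⟨hy.1, hya⟩) fun hay => ⟨hay, hy.2.le⟩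

variable [NormedSpace ℝ E]

/-- The function `F(x) = ∫₀ˣ f` on `(0, ∞)`. It is `0` at every `x` for which `f` is not integrable
on `(0, x)`. -/
noncomputable def cumulativeIntegral (f : ℝ → E) (x : ℝ) : E :=
  ∫ y in Ioo 0 x, f y

theorem hardy_inequality_eLpNorm {p q : ℝ} (hpq : p.HolderConjugate q)
    (hf : AEStronglyMeasurable f (volume.restrict (Ioi 0))) :
    eLpNorm (fun x => x⁻¹ • cumulativeIntegral f x) (ENNReal.ofReal p) (volume.restrict (Ioi 0)) ≤
      ENNReal.ofReal q * eLpNorm f (ENNReal.ofReal p) (volume.restrict (Ioi 0)) := by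
  have hp0 : ENNReal.ofReal p ≠ 0 := (ENNReal.ofReal_pos.2 hpq.pos).ne'
  have average_le : ∀ x ∈ Ioi (0 : ℝ), ‖x⁻¹ • cumulativeIntegral f x‖ₑ ≤
      ENNReal.ofReal x⁻¹ * ∫⁻ y in Ioo 0 x, ‖f y‖ₑ := fun x hx => by
    rw [enorm_smul, Real.enorm_of_nonneg (inv_nonneg.2 (le_of_lt hx))]
    gcongr
    exact enorm_integral_le_lintegral_enorm f
  rw [eLpNorm_eq_lintegral_rpow_enorm_toReal hp0 ENNReal.ofReal_ne_top,
    eLpNorm_eq_lintegral_rpow_enorm_toReal hp0 ENNReal.ofReal_ne_top,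
    ENNReal.toReal_ofReal hpq.nonneg, one_div, ENNReal.rpow_inv_le_iff hpq.pos,
    ENNReal.mul_rpow_of_nonneg _ _ hpq.nonneg, ENNReal.rpow_inv_rpow hpq.ne_zero]
  calc ∫⁻ x in Ioi 0, ‖x⁻¹ • cumulativeIntegral f x‖ₑ ^ p
      ≤ ∫⁻ x in Ioi 0, (ENNReal.ofReal x⁻¹ * ∫⁻ y in Ioo 0 x, ‖f y‖ₑ) ^ p :=
        setLIntegral_mono' measurableSet_Ioi fun x hx =>
          ENNReal.rpow_le_rpow (average_le x hx) hpq.nonneg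
    _ ≤ ENNReal.ofReal q ^ p * ∫⁻ y in Ioi 0, ‖f y‖ₑ ^ p :=
        hardy_inequality_lintegral hpq hf.enorm

lemma hasDerivAt_cumulativeIntegral [CompleteSpace E] (hf : ContinuousOn f (Ioi 0)) {x : ℝ}
    (hx : 0 < x) (hfx : IntegrableOn f (Ioo 0 x)) :
    HasDerivAt (cumulativeIntegral f) (f x) x := by
  have ftc : HasDerivAt (fun u => ∫ y in (0 : ℝ)..u, f y) (f x) x :=
    intervalIntegral.integral_hasDerivAt_right
      ((intervalIntegrable_iff_integrableOn_Ioo_of_le hx.le).2 hfx)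
      (hf.stronglyMeasurableAtFilter isOpen_Ioi x hx) (hf.continuousAt (Ioi_mem_nhds hx))
  refine ftc.congr_of_eventuallyEq ?_
  filter_upwards [Ioi_mem_nhds hx] with y hy
  rw [cumulativeIntegral, intervalIntegral.integral_of_le (le_of_lt hy),
    integral_Ioc_eq_integral_Ioo]

/-- Integrability of `f` on `(0, x)` does not depend on `x > 0`, so the junk value `0` of
`cumulativeIntegral f` is taken either nowhere or everywhere on `(0, ∞)`. -/
lemma hasDerivAt_or_eq_zero_cumulativeIntegral [CompleteSpace E] (hf : ContinuousOn f (Ioi 0)) :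
    (∀ x ∈ Ioi 0, HasDerivAt (cumulativeIntegral f) (f x) x) ∨
      ∀ x ∈ Ioi 0, cumulativeIntegral f x = 0 := by
  by_cases h : ∃ a > 0, IntegrableOn f (Ioo 0 a)
  · obtain ⟨a, ha, hfa⟩ := h
    exact .inl fun x hx => hasDerivAt_cumulativeIntegral hf hx
      (integrableOn_Ioo_zero_of_continuousOn hf ha hfa x)
  · push Not at h
    exact .inr fun x hx => integral_undef (h x hx)

variable [CompleteSpace E]

lemma contDiffOn_cumulativeIntegral {n : ℕ} (hf : ContDiffOn ℝ n f (Ioi 0)) :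
    ContDiffOn ℝ (n + 1) (cumulativeIntegral f) (Ioi 0) := by
  rcases hasDerivAt_or_eq_zero_cumulativeIntegral hf.continuousOn with hderiv | hzero
  · rw [contDiffOn_succ_iff_deriv_of_isOpen isOpen_Ioi]
    exact ⟨fun x hx => (hderiv x hx).differentiableAt.differentiableWithinAt, by simp,
      hf.congr fun x hx => (hderiv x hx).deriv⟩
  · exact contDiffOn_const.congr hzero

lemma enorm_iteratedDerivWithin_succ_cumulativeIntegral_le (hf : ContinuousOn f (Ioi 0)) (n : ℕ)
    {x : ℝ} (hx : x ∈ Ioi 0) :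
    ‖iteratedDerivWithin (n + 1) (cumulativeIntegral f) (Ioi 0) x‖ₑ ≤
      ‖iteratedDerivWithin n f (Ioi 0) x‖ₑ := by
  rcases hasDerivAt_or_eq_zero_cumulativeIntegral hf with hderiv | hzero
  · have derivWithin_eq : EqOn (derivWithin (cumulativeIntegral f) (Ioi 0)) f (Ioi 0) :=
      fun y hy => (derivWithin_of_isOpen isOpen_Ioi hy).trans (hderiv y hy).deriv
    rw [iteratedDerivWithin_succ', iteratedDerivWithin_congr derivWithin_eq hx]
  · rw [iteratedDerivWithin_congr (g := fun _ => 0) hzero hx, iteratedDerivWithin_fun_const_zero]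
    simp

end CumulativeIntegral

section Products

open Set Finset

variable {E 𝔸 : Type*} [NormedAddCommGroup E] [NormedRing 𝔸] [Module 𝔸 E] [IsBoundedSMul 𝔸 E]

lemma eLpNorm_restrict_smul_le_iSup_mul {α : Type*} [MeasurableSpace α] {μ : Measure α} {s : Set α}
    (hs : MeasurableSet s) (p : ℝ≥0∞) (a : α → 𝔸) {u : α → E}
    (hu : AEStronglyMeasurable u (μ.restrict s)) :
    eLpNorm (a • u) p (μ.restrict s) ≤ (⨆ x ∈ s, ‖a x‖ₑ) * eLpNorm u p (μ.restrict s) := by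
  refine (eLpNorm_smul_le_eLpNorm_top_mul_eLpNorm p hu a).trans ?_
  gcongr
  rw [eLpNorm_exponent_top]
  exact eLpNormEssSup_le_of_ae_enorm_bound <|
    ae_restrict_of_forall_mem hs fun x hx => le_iSup₂ (f := fun x (_ : x ∈ s) => ‖a x‖ₑ) x hx

variable [NormedSpace ℝ E] [NormedAlgebra ℝ 𝔸] [IsScalarTower ℝ 𝔸 E]

lemma eLpNorm_iteratedDerivWithin_smul_le {μ : Measure ℝ} {s : Set ℝ} (hs : MeasurableSet s)
    (hs' : UniqueDiffOn ℝ s) {p : ℝ≥0∞} (hp : 1 ≤ p) {n : ℕ} {g : ℝ → 𝔸} {u : ℝ → E}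
    (hg : ContDiffOn ℝ n g s) (hu : ContDiffOn ℝ n u s) :
    eLpNorm (iteratedDerivWithin n (g • u) s) p (μ.restrict s) ≤
      ∑ i ∈ range (n + 1), (n.choose i : ℝ≥0∞) *
        eLpNorm (iteratedDerivWithin i g s • iteratedDerivWithin (n - i) u s) p (μ.restrict s) := by
  have leibniz : iteratedDerivWithin n (g • u) s =ᵐ[μ.restrict s] ∑ i ∈ range (n + 1),
      n.choose i • (iteratedDerivWithin i g s • iteratedDerivWithin (n - i) u s) :=
    ae_restrict_of_forall_mem hs fun x hx => by
      simp only [iteratedDerivWithin_smul hx hs' (hg x hx) (hu x hx), Finset.sum_apply,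
        Pi.smul_apply, Pi.smul_apply']
  have term_continuousOn : ∀ i ∈ range (n + 1),
      ContinuousOn (iteratedDerivWithin i g s • iteratedDerivWithin (n - i) u s) s := fun i hi =>
    (hg.continuousOn_iteratedDerivWithin
      (mod_cast Nat.lt_succ_iff.1 (Finset.mem_range.1 hi)) hs').smul
      (hu.continuousOn_iteratedDerivWithin (mod_cast n.sub_le i) hs')
  rw [eLpNorm_congr_ae leibniz]
  refine (eLpNorm_sum_le (fun i hi =>
    ((term_continuousOn i hi).aestronglyMeasurable hs).const_smul _) hp).trans_eq ?_
  simp only [eLpNorm_nsmul]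

end Products

section SobolevBound

open Set Finset

variable {E 𝔸 : Type*} [NormedAddCommGroup E] [NormedSpace ℝ E] [NormedRing 𝔸] [Module 𝔸 E]
  [IsBoundedSMul 𝔸 E] {p q : ℝ} {k : ℕ} {g : ℝ → 𝔸} {f : ℝ → E}

lemma eLpNorm_smul_iteratedDerivWithin_succ_le [CompleteSpace E] (p : ℝ≥0∞) (a : ℝ → 𝔸)
    {m : ℕ} (hf : ContDiffOn ℝ m f (Ioi 0)) :
    eLpNorm (a • iteratedDerivWithin (m + 1) (cumulativeIntegral f) (Ioi 0)) p
        (volume.restrict (Ioi 0)) ≤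
      (⨆ x ∈ Ioi (0 : ℝ), ‖a x‖ₑ) *
        eLpNorm (iteratedDerivWithin m f (Ioi 0)) p (volume.restrict (Ioi 0)) := by
  have deriv_measurable : AEStronglyMeasurable
      (iteratedDerivWithin (m + 1) (cumulativeIntegral f) (Ioi 0)) (volume.restrict (Ioi 0)) :=
    ((contDiffOn_cumulativeIntegral hf).continuousOn_iteratedDerivWithin (mod_cast le_rfl)
      (uniqueDiffOn_Ioi 0)).aestronglyMeasurable measurableSet_Ioi
  refine (eLpNorm_restrict_smul_le_iSup_mul measurableSet_Ioi p a deriv_measurable).trans ?_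
  gcongr 1
  exact eLpNorm_mono_enorm_ae <| ae_restrict_of_forall_mem measurableSet_Ioi fun x hx =>
    enorm_iteratedDerivWithin_succ_cumulativeIntegral_le hf.continuousOn m hx

variable [NormedAlgebra ℝ 𝔸] [IsScalarTower ℝ 𝔸 E]

lemma eLpNorm_smul_cumulativeIntegral_le (hpq : p.HolderConjugate q) (a : ℝ → 𝔸)
    (hf : AEStronglyMeasurable f (volume.restrict (Ioi 0)))
    (hF : ContinuousOn (cumulativeIntegral f) (Ioi 0)) :
    eLpNorm (a • cumulativeIntegral f) (ENNReal.ofReal p) (volume.restrict (Ioi 0)) ≤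
      ENNReal.ofReal q * ((⨆ x ∈ Ioi (0 : ℝ), ‖x • a x‖ₑ) *
        eLpNorm f (ENNReal.ofReal p) (volume.restrict (Ioi 0))) := by
  have factor : a • cumulativeIntegral f =ᵐ[volume.restrict (Ioi 0)]
      (fun x => x • a x) • fun x => x⁻¹ • cumulativeIntegral f x :=
    ae_restrict_of_forall_mem measurableSet_Ioi fun x (hx : 0 < x) => by
      simp only [Pi.smul_apply', smul_assoc]
      rw [smul_algebra_smul_comm, smul_inv_smul₀ hx.ne']
  have average_measurable : AEStronglyMeasurable (fun x => x⁻¹ • cumulativeIntegral f x)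
      (volume.restrict (Ioi 0)) :=
    ((continuousOn_inv₀.mono fun x (hx : 0 < x) => hx.ne').smul hF).aestronglyMeasurable
      measurableSet_Ioi
  rw [eLpNorm_congr_ae factor, mul_left_comm]
  exact (eLpNorm_restrict_smul_le_iSup_mul measurableSet_Ioi _ _ average_measurable).trans
    (mul_le_mul_right (hardy_inequality_eLpNorm hpq hf) _)

/-- The right-hand side of the Sobolev bound for `g • F`, without the constant: the part controlled
by the weighted suprema of `g` and the part controlled by the unweighted ones. -/
noncomputable def sobolevMajorant (k : ℕ) (p : ℝ) (g : ℝ → 𝔸) (f : ℝ → E) : ℝ≥0∞ :=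
  (∑ l ∈ range (k + 1), ⨆ x ∈ Ioi (0 : ℝ), ‖x • iteratedDerivWithin l g (Ioi 0) x‖ₑ) *
      eLpNorm f (ENNReal.ofReal p) (volume.restrict (Ioi 0)) +
    (⨆ l ∈ range k, ⨆ x ∈ Ioi (0 : ℝ), ‖iteratedDerivWithin l g (Ioi 0) x‖ₑ) *
      ∑ i ∈ range k,
        eLpNorm (iteratedDerivWithin i f (Ioi 0)) (ENNReal.ofReal p) (volume.restrict (Ioi 0))

variable [CompleteSpace E]

lemma eLpNorm_iteratedDerivWithin_smul_iteratedDerivWithin_le (hpq : p.HolderConjugate q)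
    (hf : ContDiffOn ℝ (k - 1 : ℕ) f (Ioi 0)) {i m : ℕ} (him : i + m ≤ k) :
    eLpNorm (iteratedDerivWithin i g (Ioi 0) •
        iteratedDerivWithin m (cumulativeIntegral f) (Ioi 0)) (ENNReal.ofReal p)
      (volume.restrict (Ioi 0)) ≤ ENNReal.ofReal q * sobolevMajorant k p g f := by
  rcases m with _ | m
  · rw [iteratedDerivWithin_zero]
    refine (eLpNorm_smul_cumulativeIntegral_le hpq _
      (hf.continuousOn.aestronglyMeasurable measurableSet_Ioi)
      (contDiffOn_cumulativeIntegral hf).continuousOn).trans ?_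
    gcongr
    refine le_add_right (mul_le_mul_left ?_ _)
    exact Finset.single_le_sum
      (f := fun l => ⨆ x ∈ Ioi (0 : ℝ), ‖x • iteratedDerivWithin l g (Ioi 0) x‖ₑ)
      (fun _ _ => zero_le) (Finset.mem_range.2 (by lia))
  · have hq : 1 ≤ ENNReal.ofReal q := ENNReal.one_le_ofReal.2 hpq.symm.lt.le
    refine (eLpNorm_smul_iteratedDerivWithin_succ_le _ _
      (hf.of_le (mod_cast (by lia : m ≤ k - 1)))).trans ?_
    refine le_trans ?_ (le_mul_of_one_le_left' hq)
    refine le_add_left (mul_le_mul' ?_ ?_)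
    · exact le_iSup₂ (f := fun l (_ : l ∈ range k) =>
        ⨆ x ∈ Ioi (0 : ℝ), ‖iteratedDerivWithin l g (Ioi 0) x‖ₑ) i (Finset.mem_range.2 (by lia))
    · exact Finset.single_le_sum (f := fun i => eLpNorm (iteratedDerivWithin i f (Ioi 0))
        (ENNReal.ofReal p) (volume.restrict (Ioi 0)))
        (fun _ _ => zero_le) (Finset.mem_range.2 (by lia))

lemma eLpNorm_iteratedDerivWithin_smul_cumulativeIntegral_le (hpq : p.HolderConjugate q)
    (hg : ContDiffOn ℝ k g (Ioi 0)) (hf : ContDiffOn ℝ (k - 1 : ℕ) f (Ioi 0)) {j : ℕ}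
    (hj : j ≤ k) :
    eLpNorm (iteratedDerivWithin j (g • cumulativeIntegral f) (Ioi 0)) (ENNReal.ofReal p)
      (volume.restrict (Ioi 0)) ≤ 2 ^ j * (ENNReal.ofReal q * sobolevMajorant k p g f) := by
  have hF : ContDiffOn ℝ k (cumulativeIntegral f) (Ioi 0) :=
    (contDiffOn_cumulativeIntegral hf).of_le (mod_cast (by lia : k ≤ k - 1 + 1))
  have hjk : (j : WithTop ℕ∞) ≤ k := mod_cast hj
  calc _ ≤ ∑ i ∈ range (j + 1), (j.choose i : ℝ≥0∞) * eLpNorm (iteratedDerivWithin i g (Ioi 0) •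
          iteratedDerivWithin (j - i) (cumulativeIntegral f) (Ioi 0)) (ENNReal.ofReal p)
          (volume.restrict (Ioi 0)) :=
        eLpNorm_iteratedDerivWithin_smul_le measurableSet_Ioi (uniqueDiffOn_Ioi 0)
          (ENNReal.one_le_ofReal.2 hpq.lt.le) (hg.of_le hjk) (hF.of_le hjk)
    _ ≤ ∑ i ∈ range (j + 1),
          (j.choose i : ℝ≥0∞) * (ENNReal.ofReal q * sobolevMajorant k p g f) := by
        gcongr with i hi
        rw [Finset.mem_range] at hi
        exact eLpNorm_iteratedDerivWithin_smul_iteratedDerivWithin_le hpq hf (by lia)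
    _ = 2 ^ j * (ENNReal.ofReal q * sobolevMajorant k p g f) := by
        rw [← Finset.sum_mul, ← Nat.cast_sum, Nat.sum_range_choose, Nat.cast_pow, Nat.cast_ofNat]

theorem gIf_sobolev_bound_general (hpq : p.HolderConjugate q) (hg : ContDiffOn ℝ k g (Ioi 0))
    (hf : ContDiffOn ℝ (k - 1 : ℕ) f (Ioi 0)) :
    ∑ j ∈ range (k + 1), eLpNorm (iteratedDerivWithin j (g • cumulativeIntegral f) (Ioi 0))
        (ENNReal.ofReal p) (volume.restrict (Ioi 0)) ≤
      ENNReal.ofReal (2 ^ (k + 1) * q) * sobolevMajorant k p g f := by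
  calc _ ≤ ∑ j ∈ range (k + 1), 2 ^ j * (ENNReal.ofReal q * sobolevMajorant k p g f) :=
        Finset.sum_le_sum fun j hj => eLpNorm_iteratedDerivWithin_smul_cumulativeIntegral_le hpq hg
          hf (Nat.lt_succ_iff.1 (Finset.mem_range.1 hj))
    _ = ((∑ j ∈ range (k + 1), 2 ^ j : ℕ) : ℝ≥0∞) *
          (ENNReal.ofReal q * sobolevMajorant k p g f) := by
        push_cast
        rw [Finset.sum_mul]
    _ ≤ ((2 ^ (k + 1) : ℕ) : ℝ≥0∞) * (ENNReal.ofReal q * sobolevMajorant k p g f) := by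
        gcongr
        exact (Nat.geomSum_lt le_rfl fun j => Finset.mem_range.1).le
    _ = ENNReal.ofReal (2 ^ (k + 1) * q) * sobolevMajorant k p g f := by
        rw [ENNReal.ofReal_mul (by positivity), mul_assoc]
        norm_num [ENNReal.ofReal_pow]

end SobolevBound

lemma eLpNorm_ofReal_eq_lintegral_abs_rpow {α : Type*} [MeasurableSpace α] {μ : Measure α} {p : ℝ}
    (hp : 0 < p) (u : α → ℝ) :
    eLpNorm u (ENNReal.ofReal p) μ = (∫⁻ x, ENNReal.ofReal (|u x| ^ p) ∂μ) ^ (1 / p) := by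
  rw [eLpNorm_eq_lintegral_rpow_enorm_toReal (ENNReal.ofReal_pos.2 hp).ne' ENNReal.ofReal_ne_top,
    ENNReal.toReal_ofReal hp.le]
  simp only [Real.enorm_eq_ofReal_abs, ENNReal.ofReal_rpow_of_nonneg (abs_nonneg _) hp.le]

/-- Sobolev bound for `g(x)·∫₀^x f`: for `k ≥ 0`, `p ∈ (1,∞)` there is `C = C(k,p) > 0` such
that for `g ∈ C^k((0,∞))` and locally integrable `f ∈ C^(max(k−1,0))((0,∞))`, with
`F(x) = ∫₀^x f(y) dy`,
`Σ_{j≤k} ‖(gF)^(j)‖_{L^p} ≤ C·(Σ_{l≤k} sup_{x>0}|x g^(l)(x)|·‖f‖_{L^p}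
+ [k≥1]·(max_{l<k} sup_{x>0}|g^(l)(x)|)·Σ_{i<k} ‖f^(i)‖_{L^p})` (interpreted in `[0,∞]`). -/
theorem gIf_sobolev_bound (k : ℕ) (p : ℝ) (hp : 1 < p) :
    ∃ C > 0, ∀ g f : ℝ → ℝ,
      ContDiffOn ℝ k g (Set.Ioi 0) →
      ContDiffOn ℝ (max (k - 1) 0 : ℕ) f (Set.Ioi 0) →
      LocallyIntegrableOn f (Set.Ioi 0) →
      ∑ j ∈ Finset.range (k + 1),
          (∫⁻ x in Set.Ioi (0 : ℝ),
            ENNReal.ofReal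
              (|iteratedDerivWithin j (fun x => g x * ∫ y in Set.Ioo (0 : ℝ) x, f y)
                  (Set.Ioi 0) x| ^ p)) ^ (1 / p)
        ≤ ENNReal.ofReal C *
          ((∑ l ∈ Finset.range (k + 1),
              ⨆ x ∈ Set.Ioi (0 : ℝ),
                ENNReal.ofReal (|x * iteratedDerivWithin l g (Set.Ioi 0) x|)) *
              (∫⁻ x in Set.Ioi (0 : ℝ), ENNReal.ofReal (|f x| ^ p)) ^ (1 / p) +
            (if 1 ≤ k then (1 : ℝ≥0∞) else 0) *
              (⨆ l ∈ Finset.range k,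
                ⨆ x ∈ Set.Ioi (0 : ℝ),
                  ENNReal.ofReal (|iteratedDerivWithin l g (Set.Ioi 0) x|)) *
              ∑ i ∈ Finset.range k,
                (∫⁻ x in Set.Ioi (0 : ℝ),
                  ENNReal.ofReal (|iteratedDerivWithin i f (Set.Ioi 0) x| ^ p)) ^ (1 / p)) := by
  have hpq := Real.HolderConjugate.conjExponent hp
  refine ⟨2 ^ (k + 1) * p.conjExponent, mul_pos (by positivity) hpq.symm.pos, ?_⟩
  intro g f hg hf _
  have iverson_mul (B S : ℝ≥0∞) (hS : k = 0 → S = 0) :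
      (if 1 ≤ k then 1 else 0) * B * S = B * S := by
    rcases k.eq_zero_or_pos with hk | hk
    · simp only [hS hk, mul_zero]
    · rw [if_pos (Nat.one_le_iff_ne_zero.2 hk.ne'), one_mul]
  have bound := gIf_sobolev_bound_general hpq hg (by simpa only [Nat.max_zero] using hf)
  simp only [sobolevMajorant, eLpNorm_ofReal_eq_lintegral_abs_rpow hpq.pos,
    Real.enorm_eq_ofReal_abs, smul_eq_mul] at bound
  rw [iverson_mul _ _ fun hk => by rw [hk, Finset.range_zero, Finset.sum_empty]]
  exact bound
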